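/- Let φ ∈ Γ₀(H) satisfy φ*(H) ⊂ [0,+∞] and (φ*)⁻¹((0,+∞)) ≠ ∅, let s: G → [−∞,+∞] be such that −s ∈ Γ₀(G) and S = s⁻¹((0,+∞)) ≠ ∅, let γ ∈ (0,+∞), and let (x,y) ∈ Ω₃. Then the unique η ∈ [0,+∞) satisfying (−s)_▽( prox_{(γ·φ*(prox_{(η/γ)⊙φ*}(x/γ)))⊙(−s)_▽} y ) + η = 0 equals s(proj_{cl S} y) > 0, and prox_{γ(φ▷s)}(x,y) = ( x − γ·prox_{(s(proj_{cl S} y)/γ)·φ*}(x/γ), proj_{cl S} y ). -/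

import Mathlib

open scoped Classical

noncomputable section

/-- Effective domain of an extended-real-valued function. -/
def edom {E : Type*} (f : E → EReal) : Set E := {x | f x < ⊤}

/-- Convexity of an extended-real-valued function, via its epigraph. -/
def ConvexEpi {E : Type*} [AddCommGroup E] [Module ℝ E] (f : E → EReal) : Prop :=
  Convex ℝ {p : E × ℝ | f p.1 ≤ (p.2 : EReal)}

/-- `f ∈ Γ₀(E)`: proper, lower semicontinuous, convex, with values in `(-∞, +∞]`. -/
def IsGamma0 {E : Type*} [AddCommGroup E] [Module ℝ E] [TopologicalSpace E]
    (f : E → EReal) : Prop :=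
  (∃ x, f x ≠ ⊤) ∧ (∀ x, f x ≠ ⊥) ∧ LowerSemicontinuous f ∧ ConvexEpi f

/-- Proximity operator: the (unique, for `f ∈ Γ₀`) minimizer of
`y ↦ f y + ‖x - y‖² / 2`. -/
def prox {E : Type*} [NormedAddCommGroup E] [InnerProductSpace ℝ E]
    (f : E → EReal) (x : E) : E :=
  Classical.epsilon fun p =>
    ∀ y, f p + ((‖x - p‖ ^ 2 / 2 : ℝ) : EReal) ≤ f y + ((‖x - y‖ ^ 2 / 2 : ℝ) : EReal)

/-- Metric projection onto a set. -/
def projC {E : Type*} [NormedAddCommGroup E] (C : Set E) (x : E) : E :=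
  Classical.epsilon fun p => p ∈ C ∧ ∀ y ∈ C, ‖x - p‖ ≤ ‖x - y‖

/-- Fenchel conjugate. -/
def fconj {E : Type*} [NormedAddCommGroup E] [InnerProductSpace ℝ E]
    (f : E → EReal) (y : E) : EReal :=
  ⨆ x, ((inner ℝ x y : ℝ) : EReal) - f x

/-- Plain scalar multiple `ξ·f`. -/
def smulE {E : Type*} (ξ : ℝ) (f : E → EReal) : E → EReal := fun x => (ξ : EReal) * f x

/-- The operation `ξ ⊙ f`: indicator of `cl (dom f)` if `ξ = 0`, and `ξ·f` if `ξ > 0`. -/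
def rscale {E : Type*} [TopologicalSpace E] (ξ : ℝ) (f : E → EReal) : E → EReal :=
  if ξ = 0 then fun x => if x ∈ closure (edom f) then (0 : EReal) else ⊤
  else fun x => (ξ : EReal) * f x

/-- `f^∨`: agrees with `f` where `-∞ < f < 0`, and is `+∞` elsewhere. -/
def pbas {E : Type*} (f : E → EReal) : E → EReal :=
  fun x => if ⊥ < f x ∧ f x < 0 then f x else ⊤

/-- `f^∧`: agrees with `f` where `0 < f < +∞`, and is `+∞` elsewhere. -/
def phaut {E : Type*} (f : E → EReal) : E → EReal :=
  fun x => if 0 < f x ∧ f x < ⊤ then f x else ⊤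

/-- `f_▽ = (f^∨)**`. -/
def basEnv {E : Type*} [NormedAddCommGroup E] [InnerProductSpace ℝ E]
    (f : E → EReal) : E → EReal :=
  fconj (fconj (pbas f))

/-- `f_▲ = (f^∧)**`. -/
def hautEnv {E : Type*} [NormedAddCommGroup E] [InnerProductSpace ℝ E]
    (f : E → EReal) : E → EReal :=
  fconj (fconj (phaut f))

/-- `S = s⁻¹((0, +∞))`. -/
def sdom {G : Type*} (s : G → EReal) : Set G := {v | 0 < s v ∧ s v < ⊤}

/-- The preperspective `φ ⋉ s`, on the Hilbert direct sum `H ⊕ G`. -/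
def prePersp {H G : Type*} [NormedAddCommGroup H] [InnerProductSpace ℝ H]
    [NormedAddCommGroup G] [InnerProductSpace ℝ G]
    (φ : H → EReal) (s : G → EReal) : WithLp 2 (H × G) → EReal := fun q =>
  if 0 < s ((WithLp.equiv 2 (H × G)) q).2 ∧ s ((WithLp.equiv 2 (H × G)) q).2 < ⊤ then
    s ((WithLp.equiv 2 (H × G)) q).2 *
      φ ((s ((WithLp.equiv 2 (H × G)) q).2).toReal⁻¹ • ((WithLp.equiv 2 (H × G)) q).1)
  else ⊤

/-- The perspective `φ ▷ s`: the largest lower semicontinuous convex minorant of the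
preperspective `φ ⋉ s`, on the Hilbert direct sum `H ⊕ G`. -/
def persp {H G : Type*} [NormedAddCommGroup H] [InnerProductSpace ℝ H]
    [NormedAddCommGroup G] [InnerProductSpace ℝ G]
    (φ : H → EReal) (s : G → EReal) : WithLp 2 (H × G) → EReal := fun q =>
  sSup {t : EReal | ∃ g : WithLp 2 (H × G) → EReal,
    LowerSemicontinuous g ∧ ConvexEpi g ∧ (∀ r, g r ≤ prePersp φ s r) ∧ t = g q}

/-- The point `(x, y)` in the Hilbert direct sum `H ⊕ G`. -/
def pairHG {H G : Type*} (x : H) (y : G) : WithLp 2 (H × G) :=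
  (WithLp.equiv 2 (H × G)).symm (x, y)

end
noncomputable section

/-- `Ω₁` of Proposition 4.2. -/
def Omega1 {H G : Type*} [NormedAddCommGroup H] [InnerProductSpace ℝ H]
    [NormedAddCommGroup G] [InnerProductSpace ℝ G]
    (φ : H → EReal) (s : G → EReal) (γ : ℝ) : Set (H × G) :=
  {p | fconj φ (projC (closure (edom (fconj φ))) (γ⁻¹ • p.1)) = 0 ∧
       s (projC (closure (sdom s)) p.2) = 0}

/-- `Ω₂` of Proposition 4.2. -/
def Omega2 {H G : Type*} [NormedAddCommGroup H] [InnerProductSpace ℝ H]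
    [NormedAddCommGroup G] [InnerProductSpace ℝ G]
    (φ : H → EReal) (s : G → EReal) (γ : ℝ) : Set (H × G) :=
  {p | (0 < fconj φ (projC (closure (edom (fconj φ))) (γ⁻¹ • p.1)) ∧
        fconj φ (projC (closure (edom (fconj φ))) (γ⁻¹ • p.1)) < ⊤) ∧
       s (prox (smulE (γ * (fconj φ (projC (closure (edom (fconj φ))) (γ⁻¹ • p.1))).toReal)
            (basEnv fun v => -(s v))) p.2) = 0}

/-- `Ω₃` of Proposition 4.2. -/
def Omega3 {H G : Type*} [NormedAddCommGroup H] [InnerProductSpace ℝ H]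
    [NormedAddCommGroup G] [InnerProductSpace ℝ G]
    (φ : H → EReal) (s : G → EReal) (γ : ℝ) : Set (H × G) :=
  {p | fconj φ (prox (smulE ((s (projC (closure (sdom s)) p.2)).toReal / γ) (fconj φ))
          (γ⁻¹ • p.1)) = 0 ∧
       0 < s (projC (closure (sdom s)) p.2) ∧ s (projC (closure (sdom s)) p.2) < ⊤}

/-- The equation (4.2) for `η` in Theorem 4.1(i). -/
def eta7eq {H G : Type*} [NormedAddCommGroup H] [InnerProductSpace ℝ H]
    [NormedAddCommGroup G] [InnerProductSpace ℝ G]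
    (φ : H → EReal) (s : G → EReal) (γ : ℝ) (x : H) (y : G) (η : ℝ) : Prop :=
  basEnv (fun v => -(s v))
      (prox (rscale (γ * (fconj φ (prox (rscale (η / γ) (fconj φ)) (γ⁻¹ • x))).toReal)
        (basEnv fun v => -(s v))) y) + (η : EReal) = 0

end

/-
A point `p` equals `prox f x` as soon as `x - p` is a subgradient of `f` at `p`. Let `p` be the
projection of `y` onto `cl S`, `σ = s p`, `w = prox (σ/γ φ*) (x/γ)` and `a = x - γ w`. Then
`(w, (y - p)/γ)` is a subgradient of the perspective at `(a, p)`: since `φ*(w) = 0`, the function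
`⟪·, w⟫ + ι_{cl S}` lies below the preperspective, hence below the perspective, and it agrees with
both at `(a, p)` because the optimality of `w` reads `a/σ ∈ ∂φ*(w)`, that is, `φ(a/σ) = ⟪a/σ, w⟫`
by Fenchel–Moreau; and `(y - p)/γ` is normal to `cl S` at `p`.

If `η` solves the scalar equation and `φ*(prox (η/γ φ*) (x/γ))` is a positive real, then `σ ≤ η`,
because a proximal step does not increase the value of `(-s)_▽` above its value `-σ` at `p`. But the
value of `φ*` at its proximal points decreases with the parameter and already vanishes at `σ/γ`, a
contradiction; so the inner parameter is zero, the inner prox is `p`, and `η = σ`.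
-/

open Filter Topology Set
open scoped InnerProductSpace

section Convexity

variable {E : Type*} [AddCommGroup E] [Module ℝ E] {f : E → EReal}

lemma ConvexEpi.apply_combo_le (hf : ConvexEpi f) {u v : E} {r t a b : ℝ}
    (hu : f u ≤ (r : EReal)) (hv : f v ≤ (t : EReal)) (ha : 0 ≤ a) (hb : 0 ≤ b)
    (hab : a + b = 1) : f (a • u + b • v) ≤ ((a * r + b * t : ℝ) : EReal) :=
  hf (x := (u, r)) hu (y := (v, t)) hv ha hb hab

lemma ConvexEpi.convex_lt (hf : ConvexEpi f) (c : EReal) : Convex ℝ {x | f x < c} := by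
  intro u hu v hv a b ha hb hab
  obtain ⟨r, hur, hrc⟩ := EReal.lt_iff_exists_real_btwn.1 hu
  obtain ⟨t, hvt, htc⟩ := EReal.lt_iff_exists_real_btwn.1 hv
  calc f (a • u + b • v) ≤ ((a * r + b * t : ℝ) : EReal) :=
        hf.apply_combo_le hur.le hvt.le ha hb hab
    _ ≤ ((max r t : ℝ) : EReal) := EReal.coe_le_coe (Convex.combo_le_max r t ha hb hab)
    _ = max (r : EReal) t := EReal.coe_strictMono.monotone.map_max
    _ < c := max_lt hrc htc

lemma ConvexEpi.convex_edom (hf : ConvexEpi f) : Convex ℝ (edom f) :=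
  hf.convex_lt ⊤

lemma convexEpi_coe {g : E → ℝ} (hg : ConvexOn ℝ univ g) :
    ConvexEpi fun x => (g x : EReal) := by
  simpa [ConvexEpi] using hg.convex_epigraph

end Convexity

section Restriction

variable {E : Type*} {C : Set E} {f : E → EReal} {x : E}

/-- The function `f + ι_C`, where `ι_C` is the indicator function of `C` in the sense of convex
analysis. Prescribing the value `⊤` off `C` avoids the sum `⊥ + ⊤`. -/
noncomputable def restrictTop (C : Set E) (f : E → EReal) : E → EReal :=
  fun x => if x ∈ C then f x else ⊤

lemma restrictTop_of_mem (hx : x ∈ C) : restrictTop C f x = f x :=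
  if_pos hx

lemma restrictTop_of_notMem (hx : x ∉ C) : restrictTop C f x = ⊤ :=
  if_neg hx

lemma restrictTop_anti {D : Set E} (h : C ⊆ D) : restrictTop D f x ≤ restrictTop C f x := by
  by_cases hx : x ∈ C
  · rw [restrictTop_of_mem hx, restrictTop_of_mem (h hx)]
  · exact le_top.trans_eq (restrictTop_of_notMem hx).symm

lemma lowerSemicontinuous_restrictTop [TopologicalSpace E] (hC : IsClosed C)
    (hf : LowerSemicontinuous f) : LowerSemicontinuous (restrictTop C f) := by
  rw [lowerSemicontinuous_iff_isClosed_preimage]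
  intro t
  rcases eq_or_ne t ⊤ with rfl | ht
  · simp
  · have hsub : restrictTop C f ⁻¹' Iic t = C ∩ f ⁻¹' Iic t := by
      ext v
      by_cases hv : v ∈ C <;> simp [restrictTop, hv, ht]
    rw [hsub]
    exact hC.inter (hf.isClosed_preimage t)

lemma ConvexEpi.restrictTop [AddCommGroup E] [Module ℝ E] (hf : ConvexEpi f)
    (hC : Convex ℝ C) : ConvexEpi (restrictTop C f) := by
  have hepi : {p : E × ℝ | _root_.restrictTop C f p.1 ≤ (p.2 : EReal)}
      = {p : E × ℝ | f p.1 ≤ (p.2 : EReal)} ∩ LinearMap.fst ℝ E ℝ ⁻¹' C := by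
    ext p
    by_cases hp : p.1 ∈ C <;> simp [_root_.restrictTop, hp]
  rw [ConvexEpi, hepi]
  exact hf.inter (hC.linear_preimage _)

lemma pbas_eq_restrictTop (hf : ∀ x, f x ≠ ⊥) : pbas f = restrictTop {x | f x < 0} f := by
  funext x
  by_cases hx : x ∈ {x | f x < 0}
  · exact (if_pos ⟨bot_lt_iff_ne_bot.2 (hf x), hx⟩).trans (restrictTop_of_mem hx).symm
  · exact (if_neg fun h => hx h.2).trans (restrictTop_of_notMem hx).symm

end Restriction

section PositiveMultiples

variable {E : Type*} {f : E → EReal} {c : ℝ}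

lemma smulE_le_iff (hc : 0 < c) {x : E} {t : EReal} : smulE c f x ≤ t ↔ f x ≤ t / c := by
  rw [EReal.le_div_iff_mul_le (by exact_mod_cast hc) (EReal.coe_ne_top c), mul_comm, smulE]

lemma smulE_le_coe_iff (hc : 0 < c) {x : E} {t : ℝ} :
    smulE c f x ≤ t ↔ f x ≤ ((t / c : ℝ) : EReal) := by
  rw [smulE_le_iff hc, EReal.coe_div]

lemma smulE_inv_smulE (hc : c ≠ 0) : smulE c⁻¹ (smulE c f) = f := by
  funext x
  rw [smulE, smulE, ← mul_assoc, ← EReal.coe_mul, inv_mul_cancel₀ hc, EReal.coe_one, one_mul]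

lemma lowerSemicontinuous_smulE [TopologicalSpace E] (hc : 0 < c)
    (hf : LowerSemicontinuous f) : LowerSemicontinuous (smulE c f) := by
  rw [lowerSemicontinuous_iff_isClosed_preimage]
  intro t
  have hsub : smulE c f ⁻¹' Iic t = f ⁻¹' Iic (t / c) := ext fun x => smulE_le_iff hc
  rw [hsub]
  exact hf.isClosed_preimage _

lemma ConvexEpi.smulE [AddCommGroup E] [Module ℝ E] (hf : ConvexEpi f) (hc : 0 < c) :
    ConvexEpi (smulE c f) := by
  intro p hp q hq a b ha hb hab
  have hcombo : a * (p.2 / c) + b * (q.2 / c) = (a * p.2 + b * q.2) / c := by ring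
  refine (smulE_le_coe_iff hc).2 (le_of_le_of_eq ?_ (congrArg Real.toEReal hcombo))
  exact hf.apply_combo_le ((smulE_le_coe_iff hc).1 hp) ((smulE_le_coe_iff hc).1 hq) ha hb hab

lemma rscale_of_pos [TopologicalSpace E] (hc : 0 < c) : rscale c f = smulE c f :=
  if_neg hc.ne'

end PositiveMultiples

namespace IsGamma0

variable {E : Type*} [AddCommGroup E] [Module ℝ E] [TopologicalSpace E] {f : E → EReal}

lemma ne_bot (hf : IsGamma0 f) (x : E) : f x ≠ ⊥ := hf.2.1 x

lemma lowerSemicontinuous (hf : IsGamma0 f) : LowerSemicontinuous f := hf.2.2.1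

lemma convexEpi (hf : IsGamma0 f) : ConvexEpi f := hf.2.2.2

lemma exists_eq_coe (hf : IsGamma0 f) : ∃ (x : E) (r : ℝ), f x = r := by
  obtain ⟨x, hx⟩ := hf.1
  exact ⟨x, (f x).toReal, (EReal.coe_toReal hx (hf.ne_bot x)).symm⟩

lemma nonempty_edom (hf : IsGamma0 f) : (edom f).Nonempty :=
  hf.1.imp fun _ hx => hx.lt_top

lemma smulE (hf : IsGamma0 f) {c : ℝ} (hc : 0 < c) : IsGamma0 (smulE c f) := by
  have hc' : (0 : EReal) < c := by exact_mod_cast hc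
  refine ⟨hf.1.imp fun x hx => ?_, fun x => ?_, lowerSemicontinuous_smulE hc
    hf.lowerSemicontinuous, hf.convexEpi.smulE hc⟩
  · lift f x to ℝ using ⟨hx, hf.ne_bot x⟩ with r hr
    rw [_root_.smulE, ← hr, ← EReal.coe_mul]
    exact EReal.coe_ne_top _
  · intro h
    have hle : f x ≤ ⊥ / (c : EReal) := (smulE_le_iff hc).1 h.le
    rw [EReal.bot_div_of_pos_ne_top hc' (EReal.coe_ne_top c), le_bot_iff] at hle
    exact hf.ne_bot x hle

end IsGamma0

section AffineMinorants

variable {E : Type*} [NormedAddCommGroup E] [InnerProductSpace ℝ E] {f : E → EReal}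

lemma coe_inner_sub_div_le {a : E} {c u : ℝ} (hc : 0 < c)
    (h : ∀ (y : E) (r : ℝ), f y ≤ r → ⟪a, y⟫_ℝ - c * r < u) (y : E) :
    ((⟪c⁻¹ • a, y⟫_ℝ - u / c : ℝ) : EReal) ≤ f y := by
  refine EReal.le_of_forall_lt_iff_le.1 fun r hr => EReal.coe_le_coe ?_
  rw [real_inner_smul_left, ← div_eq_inv_mul, ← sub_div, div_le_iff₀ hc]
  linarith [h y r hr.le]

variable [CompleteSpace E]

lemma exists_separating_hyperplane (hlsc : LowerSemicontinuous f) (hconv : ConvexEpi f) {x₀ : E}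
    {r₀ : ℝ} (h₀ : f x₀ ≤ r₀) {x : E} {t : ℝ} (hx : (t : EReal) < f x) :
    ∃ (a : E) (c u : ℝ), 0 ≤ c ∧ u < ⟪a, x⟫_ℝ - c * t ∧
      ∀ (y : E) (r : ℝ), f y ≤ r → ⟪a, y⟫_ℝ - c * r < u := by
  have hclosed : IsClosed {p : E × ℝ | f p.1 ≤ (p.2 : EReal)} :=
    hlsc.isClosed_epigraph.preimage (continuous_id.prodMap continuous_coe_real_ereal)
  obtain ⟨F, u, hepi, hu⟩ :=
    geometric_hahn_banach_closed_point (x := (x, t)) hconv hclosed hx.not_ge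
  set a := (InnerProductSpace.toDual ℝ E).symm (F.comp (ContinuousLinearMap.inl ℝ E ℝ))
  have hF : ∀ (y : E) (r : ℝ), F (y, r) = ⟪a, y⟫_ℝ - (-F (0, 1)) * r := by
    intro y r
    have hsplit : ((y, r) : E × ℝ) = (y, 0) + r • (0, 1) := by simp
    rw [hsplit, map_add, map_smul, InnerProductSpace.toDual_symm_apply, smul_eq_mul]
    simp [mul_comm]
  have hepi' : ∀ (y : E) (r : ℝ), f y ≤ r → ⟪a, y⟫_ℝ - (-F (0, 1)) * r < u := fun y r h =>
    hF y r ▸ hepi (y, r) h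
  refine ⟨a, -F (0, 1), u, ?_, hF x t ▸ hu, hepi'⟩
  -- The epigraph contains an upward ray, on which the functional is bounded above by `u`.
  by_contra! hneg
  set r := max r₀ ((u - ⟪a, x₀⟫_ℝ) / F (0, 1))
  have hlt := hepi' x₀ r (h₀.trans (EReal.coe_le_coe (le_max_left _ _)))
  have hle := (div_le_iff₀ (by linarith)).1 (le_max_right r₀ ((u - ⟪a, x₀⟫_ℝ) / F (0, 1)))
  linarith

lemma IsGamma0.exists_affine_minorant (hf : IsGamma0 f) :
    ∃ (a : E) (b : ℝ), ∀ y, ((⟪a, y⟫_ℝ - b : ℝ) : EReal) ≤ f y := by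
  obtain ⟨x₀, r₀, h₀⟩ := hf.exists_eq_coe
  have hlt : ((r₀ - 1 : ℝ) : EReal) < f x₀ := by
    rw [h₀]
    exact EReal.coe_lt_coe (sub_one_lt r₀)
  obtain ⟨a, c, u, -, hx₀, hepi⟩ :=
    exists_separating_hyperplane hf.lowerSemicontinuous hf.convexEpi h₀.le hlt
  have hc : 0 < c := by linarith [hepi x₀ r₀ h₀.le]
  exact ⟨c⁻¹ • a, u / c, coe_inner_sub_div_le hc hepi⟩

theorem IsGamma0.exists_affine_minorant_gt (hf : IsGamma0 f) {x : E} {t : ℝ}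
    (hx : (t : EReal) < f x) :
    ∃ (a : E) (b : ℝ), (∀ y, ((⟪a, y⟫_ℝ - b : ℝ) : EReal) ≤ f y) ∧ t < ⟪a, x⟫_ℝ - b := by
  obtain ⟨x₀, r₀, h₀⟩ := hf.exists_eq_coe
  obtain ⟨a, c, u, hc, hxu, hepi⟩ :=
    exists_separating_hyperplane hf.lowerSemicontinuous hf.convexEpi h₀.le hx
  rcases hc.lt_or_eq with hc | rfl
  · refine ⟨c⁻¹ • a, u / c, coe_inner_sub_div_le hc hepi, ?_⟩
    rw [real_inner_smul_left, ← div_eq_inv_mul, ← sub_div, lt_div_iff₀ hc]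
    linarith
  · -- A vertical hyperplane is tilted by adding a large multiple of it to an affine minorant.
    obtain ⟨a', b', hminor⟩ := hf.exists_affine_minorant
    simp only [zero_mul, sub_zero] at hxu hepi
    obtain ⟨k, hk⟩ := exists_gt (max 0 ((t - (⟪a', x⟫_ℝ - b')) / (⟪a, x⟫_ℝ - u)))
    obtain ⟨hk₀, hkt⟩ := max_lt_iff.1 hk
    rw [div_lt_iff₀ (sub_pos.2 hxu)] at hkt
    refine ⟨a' + k • a, b' + k * u, fun y => ?_, ?_⟩
    · refine EReal.le_of_forall_lt_iff_le.1 fun r hr => EReal.coe_le_coe ?_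
      have hy : ⟪a', y⟫_ℝ - b' ≤ r := EReal.coe_le_coe_iff.1 ((hminor y).trans hr.le)
      rw [inner_add_left, real_inner_smul_left]
      linarith [mul_lt_mul_of_pos_left (hepi y r hr.le) hk₀]
    · rw [inner_add_left, real_inner_smul_left]
      linarith

end AffineMinorants

section Conjugate

variable {E : Type*} [NormedAddCommGroup E] [InnerProductSpace ℝ E] {f g : E → EReal}

lemma inner_sub_le_fconj (x u : E) : (⟪x, u⟫_ℝ : EReal) - f x ≤ fconj f u :=
  le_iSup (fun x => (⟪x, u⟫_ℝ : EReal) - f x) x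

lemma fconj_le_coe_iff {u : E} {b : ℝ} :
    fconj f u ≤ b ↔ ∀ x, ((⟪x, u⟫_ℝ - b : ℝ) : EReal) ≤ f x := by
  refine iSup_le_iff.trans (forall_congr' fun x => ?_)
  rw [EReal.coe_sub, EReal.sub_le_iff_le_add (.inr (EReal.coe_ne_top b))
    (.inr (EReal.coe_ne_bot b)), EReal.sub_le_iff_le_add (.inl (EReal.coe_ne_bot b))
    (.inl (EReal.coe_ne_top b)), add_comm]

lemma fconj_anti (h : ∀ x, f x ≤ g x) (u : E) : fconj g u ≤ fconj f u :=
  iSup_mono fun x => EReal.sub_le_sub le_rfl (h x)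

lemma lowerSemicontinuous_fconj : LowerSemicontinuous (fconj f) := by
  refine lowerSemicontinuous_iSup fun x => ?_
  induction f x with
  | bot => simpa using lowerSemicontinuous_const
  | top => simpa using lowerSemicontinuous_const
  | coe r =>
    have hcont : Continuous fun u : E => ((⟪x, u⟫_ℝ - r : ℝ) : EReal) :=
      continuous_coe_real_ereal.comp (by fun_prop)
    simpa only [EReal.coe_sub] using hcont.lowerSemicontinuous

lemma convexEpi_fconj : ConvexEpi (fconj f) := by
  intro p hp q hq a b ha hb hab
  refine fconj_le_coe_iff.2 fun x => ?_
  have hcombo : ⟪x, (a • p + b • q).1⟫_ℝ - (a • p + b • q).2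
      = a * (⟪x, p.1⟫_ℝ - p.2) + b * (⟪x, q.1⟫_ℝ - q.2) := by
    simp only [Prod.fst_add, Prod.smul_fst, Prod.snd_add, Prod.smul_snd, inner_add_right,
      real_inner_smul_right, smul_eq_mul]
    ring
  rw [hcombo]
  calc ((a * (⟪x, p.1⟫_ℝ - p.2) + b * (⟪x, q.1⟫_ℝ - q.2) : ℝ) : EReal)
      ≤ ((max (⟪x, p.1⟫_ℝ - p.2) (⟪x, q.1⟫_ℝ - q.2) : ℝ) : EReal) :=
        EReal.coe_le_coe (Convex.combo_le_max _ _ ha hb hab)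
    _ = max ((⟪x, p.1⟫_ℝ - p.2 : ℝ) : EReal) ((⟪x, q.1⟫_ℝ - q.2 : ℝ) : EReal) :=
        EReal.coe_strictMono.monotone.map_max
    _ ≤ f x := max_le (fconj_le_coe_iff.1 hp x) (fconj_le_coe_iff.1 hq x)

lemma fconj_fconj_le (x : E) : fconj (fconj f) x ≤ f x := by
  refine EReal.le_of_forall_lt_iff_le.1 fun r hr => fconj_le_coe_iff.2 fun u => ?_
  rw [EReal.coe_sub, real_inner_comm]
  exact (EReal.sub_le_sub le_rfl hr.le).trans (inner_sub_le_fconj x u)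

variable [CompleteSpace E]

theorem IsGamma0.fconj_fconj (hf : IsGamma0 f) : fconj (fconj f) = f := by
  funext x
  refine le_antisymm (fconj_fconj_le x) (EReal.ge_of_forall_gt_iff_ge.1 fun t ht => ?_)
  obtain ⟨a, b, hminor, hlt⟩ := hf.exists_affine_minorant_gt ht
  have hab : fconj f a ≤ b := fconj_le_coe_iff.2 fun y => real_inner_comm y a ▸ hminor y
  calc (t : EReal) ≤ ((⟪a, x⟫_ℝ - b : ℝ) : EReal) := EReal.coe_le_coe hlt.le
    _ = (⟪a, x⟫_ℝ : EReal) - b := EReal.coe_sub _ _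
    _ ≤ (⟪a, x⟫_ℝ : EReal) - fconj f a := EReal.sub_le_sub le_rfl hab
    _ ≤ fconj (fconj f) x := inner_sub_le_fconj a x

lemma IsGamma0.le_fconj_fconj (hg : IsGamma0 g) (h : ∀ x, g x ≤ f x) (x : E) :
    g x ≤ fconj (fconj f) x := by
  conv_lhs => rw [← hg.fconj_fconj]
  exact fconj_anti (fconj_anti h) x

lemma IsGamma0.fconj (hf : IsGamma0 f) : IsGamma0 (fconj f) := by
  obtain ⟨a, b, hminor⟩ := hf.exists_affine_minorant
  obtain ⟨x₀, r₀, h₀⟩ := hf.exists_eq_coe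
  refine ⟨⟨a, ne_top_of_le_ne_top (EReal.coe_ne_top b) (fconj_le_coe_iff.2 fun y => ?_)⟩,
    fun u => ?_, lowerSemicontinuous_fconj, convexEpi_fconj⟩
  · exact real_inner_comm y a ▸ hminor y
  · refine ne_bot_of_le_ne_bot (EReal.coe_ne_bot (⟪x₀, u⟫_ℝ - r₀)) ?_
    rw [EReal.coe_sub, ← h₀]
    exact inner_sub_le_fconj x₀ u

end Conjugate

section Subgradient

variable {E : Type*} [NormedAddCommGroup E] [InnerProductSpace ℝ E] {f : E → EReal} {u p : E}

/-- `u` is a subgradient of `f` at `p`, that is, `u ∈ ∂f(p)`. The finiteness of `f p` is part of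
the notion, so that the subgradient inequality is free of `⊥ + ⊤`. -/
def HasSubgradientAt (f : E → EReal) (u p : E) : Prop :=
  ∃ r : ℝ, f p = r ∧ ∀ y, ((r + ⟪u, y - p⟫_ℝ : ℝ) : EReal) ≤ f y

lemma HasSubgradientAt.smulE (h : HasSubgradientAt f u p) {c : ℝ} (hc : 0 ≤ c) :
    HasSubgradientAt (smulE c f) (c • u) p := by
  obtain ⟨r, hr, hle⟩ := h
  refine ⟨c * r, by rw [_root_.smulE, hr, EReal.coe_mul], fun y => ?_⟩
  rw [real_inner_smul_left, ← mul_add, EReal.coe_mul]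
  exact mul_le_mul_of_nonneg_left (hle y) (by exact_mod_cast hc)

lemma HasSubgradientAt.fconj_eq (h : HasSubgradientAt f u p) :
    fconj f u = (⟪p, u⟫_ℝ : EReal) - f p := by
  obtain ⟨r, hr, hle⟩ := h
  refine le_antisymm ?_ (inner_sub_le_fconj p u)
  rw [hr, ← EReal.coe_sub, fconj_le_coe_iff]
  intro x
  have hshift : ⟪x, u⟫_ℝ - (⟪p, u⟫_ℝ - r) = r + ⟪u, x - p⟫_ℝ := by
    rw [real_inner_comm (x - p) u, inner_sub_left]
    ring
  exact hshift ▸ hle x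

end Subgradient

section ProxObjective

variable {E : Type*} [NormedAddCommGroup E] {f : E → EReal} {x y : E} {t : ℝ}

/-- The objective function `y ↦ f(y) + ‖x - y‖² / 2` which `prox f x` minimizes. -/
noncomputable def proxObj (f : E → EReal) (x y : E) : EReal :=
  f y + ((‖x - y‖ ^ 2 / 2 : ℝ) : EReal)

lemma proxObj_le_coe_iff : proxObj f x y ≤ t ↔ f y ≤ ((t - ‖x - y‖ ^ 2 / 2 : ℝ) : EReal) := by
  rw [EReal.coe_sub, EReal.le_sub_iff_add_le (.inl (EReal.coe_ne_bot _))
    (.inl (EReal.coe_ne_top _)), proxObj]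

lemma coe_le_proxObj_iff : t ≤ proxObj f x y ↔ ((t - ‖x - y‖ ^ 2 / 2 : ℝ) : EReal) ≤ f y := by
  rw [EReal.coe_sub, EReal.sub_le_iff_le_add (.inl (EReal.coe_ne_bot _))
    (.inl (EReal.coe_ne_top _)), proxObj]

lemma lowerSemicontinuous_proxObj (hf : LowerSemicontinuous f) :
    LowerSemicontinuous (proxObj f x) := by
  have hcont : Continuous fun y : E => ((‖x - y‖ ^ 2 / 2 : ℝ) : EReal) :=
    continuous_coe_real_ereal.comp (by fun_prop)
  exact hf.add' hcont.lowerSemicontinuous fun y =>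
    EReal.continuousAt_add (.inr (EReal.coe_ne_bot _)) (.inr (EReal.coe_ne_top _))

end ProxObjective

section WellPosedness

variable {X : Type*} [PseudoMetricSpace X] [CompleteSpace X] {F : X → EReal} {m : ℝ} {ω : ℝ → ℝ}

lemma exists_forall_le_of_dist_le (hF : LowerSemicontinuous F) (hm : ⨅ y, F y = m)
    (hω : Tendsto ω (𝓝[>] 0) (𝓝 0))
    (hdist : ∀ ε y z, F y ≤ ((m + ε : ℝ) : EReal) → F z ≤ ((m + ε : ℝ) : EReal) →
      dist y z ≤ ω ε) : ∃ p, ∀ y, F p ≤ F y := by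
  set δ : ℕ → ℝ := fun n => 1 / (n + 1)
  have hδ : ∀ n, 0 < δ n := fun n => Nat.one_div_pos_of_nat
  have hδlim : Tendsto δ atTop (𝓝 0) := tendsto_one_div_add_atTop_nhds_zero_nat
  have hδright : Tendsto δ atTop (𝓝[>] 0) :=
    tendsto_nhdsWithin_iff.2 ⟨hδlim, Eventually.of_forall hδ⟩
  set L : ℕ → Set X := fun n => {y | F y ≤ ((m + δ n : ℝ) : EReal)}
  have hne : ∀ N, (⋂ n ≤ N, L n).Nonempty := fun N => by
    have hlt : ⨅ y, F y < ((m + δ N : ℝ) : EReal) :=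
      hm.trans_lt (EReal.coe_lt_coe (lt_add_of_pos_right m (hδ N)))
    obtain ⟨y, hy⟩ := iInf_lt_iff.1 hlt
    refine ⟨y, mem_iInter₂.2 fun n hn => hy.le.trans (EReal.coe_le_coe ?_)⟩
    exact add_le_add le_rfl (Nat.one_div_le_one_div hn)
  have hωnonneg : ∀ n, 0 ≤ ω (δ n) := fun n => by
    obtain ⟨y, hy⟩ := hne n
    have hyn : y ∈ L n := mem_iInter₂.1 hy n le_rfl
    exact dist_nonneg.trans (hdist _ y y hyn hyn)
  have hdiam : Tendsto (fun n => Metric.diam (L n)) atTop (𝓝 0) :=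
    squeeze_zero (fun n => Metric.diam_nonneg)
      (fun n => Metric.diam_le_of_forall_dist_le (hωnonneg n) fun y hy z hz => hdist _ y z hy hz)
      (hω.comp hδright)
  obtain ⟨p, hp⟩ := Metric.nonempty_iInter_of_nonempty_biInter
    (fun n => hF.isClosed_preimage ((m + δ n : ℝ) : EReal))
    (fun n => Metric.isBounded_iff.2 ⟨_, fun y hy z hz => hdist _ y z hy hz⟩) hne hdiam
  have hlim : Tendsto (fun n => ((m + δ n : ℝ) : EReal)) atTop (𝓝 m) := by
    simpa only [add_zero] using EReal.tendsto_coe.2 (hδlim.const_add m)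
  have hpm : F p ≤ m := ge_of_tendsto' hlim fun n => mem_iInter.1 hp n
  exact ⟨p, fun y => (hpm.trans hm.ge).trans (iInf_le F y)⟩

end WellPosedness

section Prox

variable {E : Type*} [NormedAddCommGroup E] [InnerProductSpace ℝ E] {f : E → EReal}
  {x y z p : E} {m ε : ℝ}

lemma ConvexEpi.norm_sub_sq_le_of_proxObj_le (hf : ConvexEpi f)
    (hm : ∀ v, (m : EReal) ≤ proxObj f x v) (hy : proxObj f x y ≤ ((m + ε : ℝ) : EReal))
    (hz : proxObj f x z ≤ ((m + ε : ℝ) : EReal)) : ‖y - z‖ ^ 2 ≤ 8 * ε := by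
  rw [proxObj_le_coe_iff] at hy hz
  have hmid := hf.apply_combo_le hy hz (a := 1 / 2) (b := 1 / 2) (by norm_num) (by norm_num)
    (by norm_num)
  have hlow := EReal.coe_le_coe_iff.1 ((coe_le_proxObj_iff.1 (hm _)).trans hmid)
  have hvec : x - ((1 / 2 : ℝ) • y + (1 / 2 : ℝ) • z) = (1 / 2 : ℝ) • ((x - y) + (x - z)) := by
    module
  have hnorm : ‖x - ((1 / 2 : ℝ) • y + (1 / 2 : ℝ) • z)‖ ^ 2
      = ‖(x - y) + (x - z)‖ ^ 2 / 4 := by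
    rw [hvec, norm_smul, mul_pow]
    norm_num
    ring
  have hpar := parallelogram_law_with_norm ℝ (x - y) (x - z)
  rw [sub_sub_sub_cancel_left, norm_sub_rev z y] at hpar
  rw [hnorm] at hlow
  linarith

lemma ConvexEpi.hasSubgradientAt_of_forall_proxObj_le (hf : ConvexEpi f) {r : ℝ} (hr : f p = r)
    (hp : ∀ y, proxObj f x p ≤ proxObj f x y) : HasSubgradientAt f (x - p) p := by
  refine ⟨r, hr, fun y => EReal.le_of_forall_lt_iff_le.1 fun t ht => EReal.coe_le_coe ?_⟩
  have hsegment : ∀ k ∈ Ioo (0 : ℝ) 1, r + ⟪x - p, y - p⟫_ℝ ≤ t + k * (‖y - p‖ ^ 2 / 2) := by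
    intro k hk
    have hcombo :=
      hf.apply_combo_le hr.le ht.le (a := 1 - k) (by linarith [hk.2]) hk.1.le (by ring)
    have hmin := hp ((1 - k) • p + k • y)
    rw [proxObj, hr, ← EReal.coe_add, coe_le_proxObj_iff] at hmin
    have hreal := EReal.coe_le_coe_iff.1 (hmin.trans hcombo)
    have hvec : x - ((1 - k) • p + k • y) = (x - p) - k • (y - p) := by module
    rw [hvec, norm_sub_sq_real (x - p), real_inner_smul_right, norm_smul,
      Real.norm_of_nonneg hk.1.le, mul_pow] at hreal
    refine le_of_mul_le_mul_left ?_ hk.1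
    linarith
  have hlim : Tendsto (fun k : ℝ => t + k * (‖y - p‖ ^ 2 / 2)) (𝓝[>] 0) (𝓝 t) := by
    refine Tendsto.mono_left ?_ nhdsWithin_le_nhds
    exact Continuous.tendsto' (by fun_prop) _ _ (by simp)
  exact ge_of_tendsto hlim (eventually_of_mem (Ioo_mem_nhdsGT one_pos) hsegment)

lemma HasSubgradientAt.proxObj_add_le (h : HasSubgradientAt f (x - p) p) (y : E) :
    proxObj f x p + ((‖y - p‖ ^ 2 / 2 : ℝ) : EReal) ≤ proxObj f x y := by
  obtain ⟨r, hr, hle⟩ := h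
  rw [proxObj, hr, ← EReal.coe_add, ← EReal.coe_add, coe_le_proxObj_iff]
  have hexpand : r + ‖x - p‖ ^ 2 / 2 + ‖y - p‖ ^ 2 / 2 - ‖x - y‖ ^ 2 / 2
      = r + ⟪x - p, y - p⟫_ℝ := by
    rw [← sub_sub_sub_cancel_right x y p, norm_sub_sq_real (x - p)]
    ring
  exact hexpand ▸ hle y

lemma proxObj_prox_le (hp : ∀ y, proxObj f x p ≤ proxObj f x y) (y : E) :
    proxObj f x (prox f x) ≤ proxObj f x y :=
  Classical.epsilon_spec (p := fun q => ∀ y, proxObj f x q ≤ proxObj f x y) ⟨p, hp⟩ y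

lemma prox_eq_of_hasSubgradientAt (h : HasSubgradientAt f (x - p) p) : prox f x = p := by
  have hmin : ∀ y, proxObj f x p ≤ proxObj f x y := fun y =>
    (le_add_of_nonneg_right (by exact_mod_cast by positivity)).trans (h.proxObj_add_le y)
  have hle := (h.proxObj_add_le (prox f x)).trans (proxObj_prox_le hmin p)
  obtain ⟨r, hr, -⟩ := h
  rw [proxObj, hr, ← EReal.coe_add, ← EReal.coe_add, EReal.coe_le_coe_iff] at hle
  have hzero : ‖prox f x - p‖ ^ 2 = 0 := by
    linarith [sq_nonneg ‖prox f x - p‖]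
  exact sub_eq_zero.1 (norm_eq_zero.1 (pow_eq_zero_iff two_ne_zero |>.1 hzero))

variable [CompleteSpace E]

lemma IsGamma0.exists_coe_le_proxObj (hf : IsGamma0 f) (x : E) :
    ∃ k : ℝ, ∀ y, (k : EReal) ≤ proxObj f x y := by
  obtain ⟨a, b, hminor⟩ := hf.exists_affine_minorant
  refine ⟨⟪a, x⟫_ℝ - b - ‖a‖ ^ 2 / 2, fun y => coe_le_proxObj_iff.2 ?_⟩
  refine (EReal.coe_le_coe ?_).trans (hminor y)
  have hsq := sq_nonneg ‖a - (x - y)‖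
  rw [norm_sub_sq_real, inner_sub_right] at hsq
  linarith

lemma IsGamma0.exists_forall_proxObj_le (hf : IsGamma0 f) (x : E) :
    ∃ p, ∀ y, proxObj f x p ≤ proxObj f x y := by
  obtain ⟨k, hk⟩ := hf.exists_coe_le_proxObj x
  obtain ⟨x₀, r₀, h₀⟩ := hf.exists_eq_coe
  obtain ⟨m, hm⟩ : ∃ m : ℝ, (m : EReal) = ⨅ y, proxObj f x y := by
    refine ⟨_, EReal.coe_toReal (ne_top_of_le_ne_top ?_ (iInf_le _ x₀))
      (ne_bot_of_le_ne_bot (EReal.coe_ne_bot k) (le_iInf hk))⟩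
    rw [proxObj, h₀, ← EReal.coe_add]
    exact EReal.coe_ne_top _
  have hlim : Tendsto (fun ε : ℝ => √(8 * ε)) (𝓝[>] 0) (𝓝 0) :=
    (Continuous.tendsto' (by fun_prop) _ _ (by simp)).mono_left nhdsWithin_le_nhds
  refine exists_forall_le_of_dist_le (lowerSemicontinuous_proxObj hf.lowerSemicontinuous) hm.symm
    hlim fun ε y z hy hz => ?_
  rw [dist_eq_norm]
  exact Real.le_sqrt_of_sq_le
    (hf.convexEpi.norm_sub_sq_le_of_proxObj_le (fun v => hm ▸ iInf_le _ v) hy hz)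

lemma IsGamma0.hasSubgradientAt_prox (hf : IsGamma0 f) (x : E) :
    HasSubgradientAt f (x - prox f x) (prox f x) := by
  obtain ⟨p, hp⟩ := hf.exists_forall_proxObj_le x
  have hmin := proxObj_prox_le hp
  obtain ⟨x₀, r₀, h₀⟩ := hf.exists_eq_coe
  have hfin : f (prox f x) ≤ ((r₀ + ‖x - x₀‖ ^ 2 / 2 - ‖x - prox f x‖ ^ 2 / 2 : ℝ) : EReal) := by
    rw [← proxObj_le_coe_iff, EReal.coe_add, ← h₀]
    exact hmin x₀
  exact hf.convexEpi.hasSubgradientAt_of_forall_proxObj_le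
    (EReal.coe_toReal (ne_top_of_le_ne_top (EReal.coe_ne_top _) hfin) (hf.ne_bot _)).symm hmin

lemma hasSubgradientAt_prox_smulE (hf : IsGamma0 f) {c : ℝ} (hc : 0 < c) (x : E) :
    HasSubgradientAt f (c⁻¹ • (x - prox (smulE c f) x)) (prox (smulE c f) x) := by
  have hsmul := ((hf.smulE hc).hasSubgradientAt_prox x).smulE (inv_nonneg.2 hc.le)
  rwa [smulE_inv_smulE hc.ne'] at hsmul

end Prox

section Projection

variable {E : Type*} [NormedAddCommGroup E] [InnerProductSpace ℝ E] [CompleteSpace E] {C : Set E}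

lemma projC_spec (hne : C.Nonempty) (hcl : IsClosed C) (hcv : Convex ℝ C) (x : E) :
    projC C x ∈ C ∧ ∀ y ∈ C, ‖x - projC C x‖ ≤ ‖x - y‖ := by
  obtain ⟨p, hp, hmin⟩ := exists_norm_eq_iInf_of_complete_convex hne hcl.isComplete hcv x
  refine Classical.epsilon_spec (p := fun p => p ∈ C ∧ ∀ y ∈ C, ‖x - p‖ ≤ ‖x - y‖)
    ⟨p, hp, fun y hy => hmin.trans_le ?_⟩
  exact ciInf_le ⟨0, forall_mem_range.2 fun w => norm_nonneg _⟩ (⟨y, hy⟩ : C)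

lemma inner_sub_projC_le_zero (hne : C.Nonempty) (hcl : IsClosed C) (hcv : Convex ℝ C) (x : E)
    {y : E} (hy : y ∈ C) : ⟪x - projC C x, y - projC C x⟫_ℝ ≤ 0 := by
  obtain ⟨hmem, hmin⟩ := projC_spec hne hcl hcv x
  have : Nonempty C := hne.to_subtype
  refine (norm_eq_iInf_iff_real_inner_le_zero hcv hmem).1 (le_antisymm ?_ ?_) y hy
  · exact le_ciInf fun w => hmin w w.2
  · exact ciInf_le ⟨0, forall_mem_range.2 fun w => norm_nonneg _⟩ (⟨_, hmem⟩ : C)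

lemma prox_restrictTop_zero (hne : C.Nonempty) (hcl : IsClosed C) (hcv : Convex ℝ C) (x : E) :
    prox (restrictTop C 0) x = projC C x := by
  refine prox_eq_of_hasSubgradientAt
    ⟨0, restrictTop_of_mem (projC_spec hne hcl hcv x).1, fun y => ?_⟩
  by_cases hy : y ∈ C
  · rw [restrictTop_of_mem hy, zero_add]
    exact EReal.coe_le_coe (inner_sub_projC_le_zero hne hcl hcv x hy)
  · exact le_top.trans_eq (restrictTop_of_notMem hy).symm

variable {f : E → EReal}

lemma IsGamma0.prox_rscale_zero (hf : IsGamma0 f) (x : E) :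
    prox (rscale 0 f) x = projC (closure (edom f)) x := by
  have hindicator : rscale 0 f = restrictTop (closure (edom f)) 0 := if_pos rfl
  rw [hindicator]
  exact prox_restrictTop_zero hf.nonempty_edom.closure isClosed_closure
    hf.convexEpi.convex_edom.closure x

lemma IsGamma0.apply_prox_smulE_le_apply_projC (hf : IsGamma0 f) {c : ℝ} (hc : 0 < c) (x : E) :
    f (prox (_root_.smulE c f) x) ≤ f (projC (closure (edom f)) x) := by
  set p := projC (closure (edom f)) x
  obtain ⟨r, hr, hle⟩ := hasSubgradientAt_prox_smulE hf hc x
  set q := prox (_root_.smulE c f) x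
  have hq : q ∈ closure (edom f) := subset_closure (hr.trans_lt (EReal.coe_lt_top r))
  have hobtuse : ⟪x - p, q - p⟫_ℝ ≤ 0 :=
    inner_sub_projC_le_zero hf.nonempty_edom.closure isClosed_closure
      hf.convexEpi.convex_edom.closure x hq
  have hacute : 0 ≤ ⟪x - q, p - q⟫_ℝ := by
    have hsplit : ⟪x - q, p - q⟫_ℝ = ‖p - q‖ ^ 2 - ⟪x - p, q - p⟫_ℝ := by
      rw [← sub_add_sub_cancel x p q, inner_add_left, real_inner_self_eq_norm_sq,
        ← neg_sub q p, inner_neg_right]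
      ring
    linarith [sq_nonneg ‖p - q‖]
  refine hr.trans_le ((EReal.coe_le_coe ?_).trans (hle p))
  rw [real_inner_smul_left]
  exact le_add_of_nonneg_right (mul_nonneg (inv_nonneg.2 hc.le) hacute)

lemma IsGamma0.apply_prox_smulE_anti (hf : IsGamma0 f) {c d : ℝ} (hc : 0 < c) (hcd : c ≤ d)
    (x : E) : f (prox (_root_.smulE d f) x) ≤ f (prox (_root_.smulE c f) x) := by
  rcases hcd.eq_or_lt with rfl | hlt
  · exact le_rfl
  have hd : 0 < d := hc.trans hlt
  obtain ⟨r, hr, hc_le⟩ := hasSubgradientAt_prox_smulE hf hc x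
  obtain ⟨t, ht, hd_le⟩ := hasSubgradientAt_prox_smulE hf hd x
  set p := prox (_root_.smulE c f) x
  set q := prox (_root_.smulE d f) x
  have hpq := hc_le q
  have hqp := hd_le p
  rw [ht, EReal.coe_le_coe_iff, real_inner_smul_left, ← le_sub_iff_add_le',
    inv_mul_le_iff₀ hc] at hpq
  rw [hr, EReal.coe_le_coe_iff, real_inner_smul_left, ← le_sub_iff_add_le',
    inv_mul_le_iff₀ hd] at hqp
  have hsum : ⟪x - p, q - p⟫_ℝ + ⟪x - q, p - q⟫_ℝ = ‖q - p‖ ^ 2 := by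
    rw [← neg_sub q p, inner_neg_right, ← sub_eq_add_neg, ← inner_sub_left, sub_sub_sub_cancel_left,
      real_inner_self_eq_norm_sq]
  have hprod : 0 ≤ (d - c) * (r - t) := by linarith [sq_nonneg ‖q - p‖]
  rw [hr, ht, EReal.coe_le_coe_iff]
  exact sub_nonneg.1 (nonneg_of_mul_nonneg_right hprod (sub_pos.2 hlt))

end Projection

section BasEnvelope

variable {E : Type*} [NormedAddCommGroup E] [InnerProductSpace ℝ E] {f : E → EReal} {x : E}

lemma basEnv_le_of_neg (hf : ∀ x, f x ≠ ⊥) (hx : f x < 0) : basEnv f x ≤ f x := by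
  refine (fconj_fconj_le x).trans_eq ?_
  rw [pbas_eq_restrictTop hf]
  exact restrictTop_of_mem hx

lemma IsGamma0.restrictTop_closure (hf : IsGamma0 f) (hneg : ∃ x, f x < 0) :
    IsGamma0 (restrictTop (closure {x | f x < 0}) f) := by
  obtain ⟨x₀, h₀⟩ := hneg
  refine ⟨⟨x₀, ?_⟩, fun x => ?_, ?_, ?_⟩
  · have hmem : x₀ ∈ closure {x | f x < 0} := subset_closure h₀
    rw [restrictTop_of_mem hmem]
    exact (h₀.trans EReal.zero_lt_top).ne
  · by_cases hx : x ∈ closure {x | f x < 0}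
    · rw [restrictTop_of_mem hx]
      exact hf.ne_bot x
    · rw [restrictTop_of_notMem hx]
      exact top_ne_bot
  · exact lowerSemicontinuous_restrictTop isClosed_closure hf.lowerSemicontinuous
  · exact hf.convexEpi.restrictTop (hf.convexEpi.convex_lt 0).closure

variable [CompleteSpace E]

lemma IsGamma0.restrictTop_closure_le_basEnv (hf : IsGamma0 f) (hneg : ∃ x, f x < 0) (x : E) :
    restrictTop (closure {x | f x < 0}) f x ≤ basEnv f x := by
  refine (hf.restrictTop_closure hneg).le_fconj_fconj (fun y => ?_) x
  rw [pbas_eq_restrictTop hf.ne_bot]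
  exact restrictTop_anti subset_closure

lemma IsGamma0.basEnv_eq_of_neg (hf : IsGamma0 f) (hx : f x < 0) : basEnv f x = f x := by
  refine le_antisymm (basEnv_le_of_neg hf.ne_bot hx) ?_
  have hmem : x ∈ closure {x | f x < 0} := subset_closure hx
  exact (restrictTop_of_mem hmem).ge.trans (hf.restrictTop_closure_le_basEnv ⟨x, hx⟩ x)

lemma IsGamma0.closure_edom_basEnv (hf : IsGamma0 f) (hneg : ∃ x, f x < 0) :
    closure (edom (basEnv f)) = closure {x | f x < 0} := by
  refine Subset.antisymm (closure_minimal (fun x hx => ?_) isClosed_closure)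
    (closure_mono fun x hx => ?_)
  · by_contra hnot
    have hle := hf.restrictTop_closure_le_basEnv hneg x
    rw [restrictTop_of_notMem hnot] at hle
    exact hx.not_ge hle
  · exact (basEnv_le_of_neg hf.ne_bot hx).trans_lt (LT.lt.trans hx EReal.zero_lt_top)

lemma IsGamma0.basEnv (hf : IsGamma0 f) (hneg : ∃ x, f x < 0) : IsGamma0 (basEnv f) := by
  refine ⟨hneg.imp fun x hx => ?_, fun x => ?_, lowerSemicontinuous_fconj, convexEpi_fconj⟩
  · rw [hf.basEnv_eq_of_neg hx]
    exact (hx.trans EReal.zero_lt_top).ne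
  · exact ne_bot_of_le_ne_bot ((hf.restrictTop_closure hneg).ne_bot x)
      (hf.restrictTop_closure_le_basEnv hneg x)

end BasEnvelope

section ScaleDomain

variable {G : Type*} {s : G → EReal} {p : G}

lemma toReal_pos_of_mem_sdom (hp : p ∈ sdom s) : 0 < (s p).toReal :=
  EReal.toReal_pos hp.1 hp.2.ne

lemma coe_toReal_of_mem_sdom (hp : p ∈ sdom s) : ((s p).toReal : EReal) = s p :=
  EReal.coe_toReal hp.2.ne (ne_bot_of_gt hp.1)

lemma sdom_eq_neg_lt_zero (hs : ∀ v, -(s v) ≠ ⊥) : sdom s = {v | -(s v) < 0} := by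
  ext v
  have hlt : s v < ⊤ := lt_top_iff_ne_top.2 fun h => hs v (by rw [h, EReal.neg_top])
  rw [mem_ofPred, EReal.neg_lt_comm, neg_zero]
  exact and_iff_left hlt

lemma convex_sdom [AddCommGroup G] [Module ℝ G] [TopologicalSpace G]
    (hs : IsGamma0 fun v => -(s v)) : Convex ℝ (sdom s) := by
  rw [sdom_eq_neg_lt_zero hs.ne_bot]
  exact hs.convexEpi.convex_lt 0

end ScaleDomain

section Perspective

variable {H G : Type*} [NormedAddCommGroup H] [InnerProductSpace ℝ H]
  [NormedAddCommGroup G] [InnerProductSpace ℝ G] {φ : H → EReal} {s : G → EReal}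
  {q : WithLp 2 (H × G)} {a w : H} {n p : G}

lemma le_persp {g : WithLp 2 (H × G) → EReal} (hlsc : LowerSemicontinuous g) (hconv : ConvexEpi g)
    (hle : ∀ r, g r ≤ prePersp φ s r) (q : WithLp 2 (H × G)) : g q ≤ persp φ s q :=
  le_sSup ⟨g, hlsc, hconv, hle, rfl⟩

lemma persp_le_prePersp (q : WithLp 2 (H × G)) : persp φ s q ≤ prePersp φ s q := by
  refine sSup_le ?_
  rintro _ ⟨g, -, -, hle, rfl⟩
  exact hle q

lemma prePersp_of_snd_mem (hq : q.snd ∈ sdom s) :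
    prePersp φ s q = s q.snd * φ ((s q.snd).toReal⁻¹ • q.fst) :=
  if_pos hq

lemma inner_le_prePersp (hw : fconj φ w ≤ 0) (hq : q.snd ∈ sdom s) :
    (⟪q.fst, w⟫_ℝ : EReal) ≤ prePersp φ s q := by
  have hσ := toReal_pos_of_mem_sdom hq
  rw [prePersp_of_snd_mem hq, ← coe_toReal_of_mem_sdom hq, EReal.toReal_coe]
  set σ := (s q.snd).toReal
  have hφ : (⟪σ⁻¹ • q.fst, w⟫_ℝ : EReal) ≤ φ (σ⁻¹ • q.fst) := by
    simpa only [sub_zero] using (fconj_le_coe_iff (b := 0)).1 (by exact_mod_cast hw) (σ⁻¹ • q.fst)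
  calc (⟪q.fst, w⟫_ℝ : EReal) = σ * (⟪σ⁻¹ • q.fst, w⟫_ℝ : EReal) := by
        rw [← EReal.coe_mul, real_inner_smul_left, mul_inv_cancel_left₀ hσ.ne']
    _ ≤ σ * φ (σ⁻¹ • q.fst) := mul_le_mul_of_nonneg_left hφ (by exact_mod_cast hσ.le)

lemma restrictTop_inner_le_persp (hs : Convex ℝ (sdom s)) (hw : fconj φ w ≤ 0)
    (q : WithLp 2 (H × G)) :
    restrictTop {q : WithLp 2 (H × G) | q.snd ∈ closure (sdom s)}
      (fun q => (⟪q.fst, w⟫_ℝ : EReal)) q ≤ persp φ s q := by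
  have hcont : Continuous fun q : WithLp 2 (H × G) => ⟪q.fst, w⟫_ℝ := by fun_prop
  have hlinear : ConvexOn ℝ univ fun q : WithLp 2 (H × G) => ⟪q.fst, w⟫_ℝ := by
    refine ⟨convex_univ, fun u _ v _ k l _ _ _ => le_of_eq ?_⟩
    simp only [WithLp.add_fst, WithLp.smul_fst, inner_add_left, real_inner_smul_left, smul_eq_mul]
  have hclosed : IsClosed {q : WithLp 2 (H × G) | q.snd ∈ closure (sdom s)} :=
    isClosed_closure.preimage (by fun_prop : Continuous fun q : WithLp 2 (H × G) => q.snd)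
  have hconvex : Convex ℝ {q : WithLp 2 (H × G) | q.snd ∈ closure (sdom s)} :=
    fun u hu v hv k l hk hl hkl => hs.closure hu hv hk hl hkl
  refine le_persp (lowerSemicontinuous_restrictTop hclosed
    (continuous_coe_real_ereal.comp hcont).lowerSemicontinuous)
    ((convexEpi_coe hlinear).restrictTop hconvex) (fun r => ?_) q
  by_cases hr : r.snd ∈ sdom s
  · have hmem : r ∈ {q : WithLp 2 (H × G) | q.snd ∈ closure (sdom s)} := subset_closure hr
    exact (restrictTop_of_mem hmem).trans_le (inner_le_prePersp hw hr)
  · exact le_top.trans_eq (if_neg hr).symm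

variable [CompleteSpace H]

lemma prePersp_pairHG_eq_inner (hφ : IsGamma0 φ) (hp : p ∈ sdom s) (hw : fconj φ w = 0)
    (ha : HasSubgradientAt (fconj φ) ((s p).toReal⁻¹ • a) w) :
    prePersp φ s (pairHG a p) = (⟪a, w⟫_ℝ : EReal) := by
  have hσ := toReal_pos_of_mem_sdom hp
  have hvalue : φ ((s p).toReal⁻¹ • a) = (((s p).toReal⁻¹ * ⟪a, w⟫_ℝ : ℝ) : EReal) := by
    rw [← hφ.fconj_fconj, ha.fconj_eq, hw, sub_zero, real_inner_comm, real_inner_smul_left]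
  calc prePersp φ s (pairHG a p) = s p * φ ((s p).toReal⁻¹ • a) := prePersp_of_snd_mem hp
    _ = (((s p).toReal * ((s p).toReal⁻¹ * ⟪a, w⟫_ℝ) : ℝ) : EReal) := by
        rw [hvalue, EReal.coe_mul (s p).toReal, coe_toReal_of_mem_sdom hp]
    _ = (⟪a, w⟫_ℝ : EReal) := by rw [mul_inv_cancel_left₀ hσ.ne']

lemma hasSubgradientAt_persp (hφ : IsGamma0 φ) (hs : Convex ℝ (sdom s)) (hp : p ∈ sdom s)
    (hw : fconj φ w = 0) (ha : HasSubgradientAt (fconj φ) ((s p).toReal⁻¹ • a) w)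
    (hn : ∀ v ∈ closure (sdom s), ⟪n, v - p⟫_ℝ ≤ 0) :
    HasSubgradientAt (persp φ s) (pairHG w n) (pairHG a p) := by
  have hminor := restrictTop_inner_le_persp hs hw.le
  have hvalue : persp φ s (pairHG a p) = (⟪a, w⟫_ℝ : EReal) := by
    refine le_antisymm
      ((persp_le_prePersp _).trans_eq (prePersp_pairHG_eq_inner hφ hp hw ha)) ?_
    have hmem : pairHG a p ∈ {q : WithLp 2 (H × G) | q.snd ∈ closure (sdom s)} := subset_closure hp
    exact (restrictTop_of_mem hmem).ge.trans (hminor _)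
  refine ⟨⟪a, w⟫_ℝ, hvalue, fun q => le_trans ?_ (hminor q)⟩
  by_cases hq : q ∈ {q : WithLp 2 (H × G) | q.snd ∈ closure (sdom s)}
  · rw [restrictTop_of_mem hq]
    have hinner : ⟪pairHG w n, q - pairHG a p⟫_ℝ = ⟪w, q.fst - a⟫_ℝ + ⟪n, q.snd - p⟫_ℝ :=
      WithLp.prod_inner_apply _ _
    refine EReal.coe_le_coe ?_
    rw [hinner, inner_sub_right, real_inner_comm w a, real_inner_comm w q.fst]
    linarith [hn q.snd hq]
  · exact le_top.trans_eq (restrictTop_of_notMem hq).symm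

variable [CompleteSpace G] {γ : ℝ} {x : H} {y : G}

theorem prox_smulE_persp (hφ : IsGamma0 φ) (hs : Convex ℝ (sdom s)) (hγ : 0 < γ)
    (hmem : (x, y) ∈ Omega3 φ s γ) :
    prox (smulE γ (persp φ s)) (pairHG x y) =
      pairHG
        (x - γ • prox (smulE ((s (projC (closure (sdom s)) y)).toReal / γ) (fconj φ)) (γ⁻¹ • x))
        (projC (closure (sdom s)) y) := by
  obtain ⟨hw, hp⟩ := hmem
  replace hp : projC (closure (sdom s)) y ∈ sdom s := hp
  have hobtuse : ∀ v ∈ closure (sdom s),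
      ⟪y - projC (closure (sdom s)) y, v - projC (closure (sdom s)) y⟫_ℝ ≤ 0 := fun v =>
    inner_sub_projC_le_zero (nonempty_of_mem hp).closure isClosed_closure hs.closure y
  have hσ := toReal_pos_of_mem_sdom hp
  have ha := hasSubgradientAt_prox_smulE hφ.fconj (div_pos hσ hγ) (γ⁻¹ • x)
  set p := projC (closure (sdom s)) y
  set w := prox (smulE ((s p).toReal / γ) (fconj φ)) (γ⁻¹ • x)
  have hscale : ((s p).toReal / γ)⁻¹ • (γ⁻¹ • x - w) = (s p).toReal⁻¹ • (x - γ • w) := by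
    rw [inv_div, div_eq_inv_mul, mul_smul, smul_sub, smul_inv_smul₀ hγ.ne']
  rw [hscale] at ha
  have hn : ∀ v ∈ closure (sdom s), ⟪γ⁻¹ • (y - p), v - p⟫_ℝ ≤ 0 := fun v hv => by
    rw [real_inner_smul_left]
    exact mul_nonpos_of_nonneg_of_nonpos (inv_nonneg.2 hγ.le) (hobtuse v hv)
  have hresidual : γ • pairHG w (γ⁻¹ • (y - p)) = pairHG x y - pairHG (x - γ • w) p := by
    refine WithLp.ofLp_injective 2 (Prod.ext (sub_sub_cancel x (γ • w)).symm ?_)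
    exact smul_inv_smul₀ hγ.ne' (y - p)
  refine prox_eq_of_hasSubgradientAt ?_
  rw [← hresidual]
  exact (hasSubgradientAt_persp hφ hs hp hw ha hn).smulE hγ.le

end Perspective

section ScalarEquation

variable {H G : Type*} [NormedAddCommGroup H] [InnerProductSpace ℝ H]
  [NormedAddCommGroup G] [InnerProductSpace ℝ G] {φ : H → EReal} {s : G → EReal}
  {γ η : ℝ} {x : H} {y p : G}

variable [CompleteSpace G]

lemma prox_rscale_zero_basEnv_neg (hs : IsGamma0 fun v => -(s v)) (hS : (sdom s).Nonempty)
    (y : G) : prox (rscale 0 (basEnv fun v => -(s v))) y = projC (closure (sdom s)) y := by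
  rw [sdom_eq_neg_lt_zero hs.ne_bot] at hS ⊢
  rw [(hs.basEnv hS).prox_rscale_zero, hs.closure_edom_basEnv hS]

lemma basEnv_neg_of_mem_sdom (hs : IsGamma0 fun v => -(s v)) (hp : p ∈ sdom s) :
    basEnv (fun v => -(s v)) p = -s p := by
  rw [sdom_eq_neg_lt_zero hs.ne_bot] at hp
  exact hs.basEnv_eq_of_neg hp

lemma eta7eq_iff_of_toReal_fconj_eq_zero (hs : IsGamma0 fun v => -(s v))
    (hp : projC (closure (sdom s)) y ∈ sdom s)
    (hzero : (fconj φ (prox (rscale (η / γ) (fconj φ)) (γ⁻¹ • x))).toReal = 0) :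
    eta7eq φ s γ x y η ↔ (η : EReal) = s (projC (closure (sdom s)) y) := by
  rw [eta7eq, hzero, mul_zero, prox_rscale_zero_basEnv_neg hs (nonempty_of_mem hp),
    basEnv_neg_of_mem_sdom hs hp, ← coe_toReal_of_mem_sdom hp, EReal.coe_eq_coe_iff]
  norm_cast
  rw [neg_add_eq_zero, eq_comm]

lemma eta7eq_toReal (hs : IsGamma0 fun v => -(s v)) (hγ : 0 < γ)
    (hmem : (x, y) ∈ Omega3 φ s γ) :
    eta7eq φ s γ x y (s (projC (closure (sdom s)) y)).toReal := by
  obtain ⟨hw, hp⟩ := hmem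
  replace hp : projC (closure (sdom s)) y ∈ sdom s := hp
  refine (eta7eq_iff_of_toReal_fconj_eq_zero hs hp ?_).2 (coe_toReal_of_mem_sdom hp)
  rw [rscale_of_pos (div_pos (toReal_pos_of_mem_sdom hp) hγ), hw, EReal.toReal_zero]

lemma le_coe_of_eta7eq_of_toReal_fconj_pos (hs : IsGamma0 fun v => -(s v)) (hγ : 0 < γ)
    (hp : projC (closure (sdom s)) y ∈ sdom s)
    (hpos : 0 < (fconj φ (prox (rscale (η / γ) (fconj φ)) (γ⁻¹ • x))).toReal)
    (h : eta7eq φ s γ x y η) : s (projC (closure (sdom s)) y) ≤ η := by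
  have hneg : ∃ v, -(s v) < 0 := by
    rw [sdom_eq_neg_lt_zero hs.ne_bot] at hp
    exact ⟨_, hp⟩
  have hβ := mul_pos hγ hpos
  have hle := (hs.basEnv hneg).apply_prox_smulE_le_apply_projC hβ y
  rw [hs.closure_edom_basEnv hneg, ← sdom_eq_neg_lt_zero hs.ne_bot,
    basEnv_neg_of_mem_sdom hs hp] at hle
  rw [eta7eq, rscale_of_pos hβ] at h
  rw [← EReal.neg_le_neg_iff]
  refine le_trans ?_ hle
  rw [← zero_sub, EReal.sub_le_iff_le_add (.inl (EReal.coe_ne_bot η)) (.inl (EReal.coe_ne_top η))]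
  exact h.ge

variable [CompleteSpace H]

theorem coe_eq_of_eta7eq (hφ : IsGamma0 φ) (hnonneg : ∀ u, 0 ≤ fconj φ u)
    (hs : IsGamma0 fun v => -(s v)) (hγ : 0 < γ) (hmem : (x, y) ∈ Omega3 φ s γ)
    (h : eta7eq φ s γ x y η) : (η : EReal) = s (projC (closure (sdom s)) y) := by
  obtain ⟨hw, hp⟩ := hmem
  replace hp : projC (closure (sdom s)) y ∈ sdom s := hp
  refine (eta7eq_iff_of_toReal_fconj_eq_zero hs hp ?_).1 h
  by_contra hne
  have hpos := (EReal.toReal_nonneg (hnonneg _)).lt_of_ne' hne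
  have hση := le_coe_of_eta7eq_of_toReal_fconj_pos hs hγ hp hpos h
  rw [← coe_toReal_of_mem_sdom hp, EReal.coe_le_coe_iff] at hση
  have hσ := toReal_pos_of_mem_sdom hp
  rw [rscale_of_pos (div_pos (hσ.trans_le hση) hγ)] at hne
  have hzero := hφ.fconj.apply_prox_smulE_anti (div_pos hσ hγ)
    (div_le_div_of_nonneg_right hση hγ.le) (γ⁻¹ • x)
  exact hne (by rw [(hzero.trans_eq hw).antisymm (hnonneg _), EReal.toReal_zero])

end ScalarEquation

theorem stmt13_general {H G : Type*}
    [NormedAddCommGroup H] [InnerProductSpace ℝ H] [CompleteSpace H]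
    [NormedAddCommGroup G] [InnerProductSpace ℝ G] [CompleteSpace G]
    (φ : H → EReal) (s : G → EReal) (hφ : IsGamma0 φ)
    (hc1 : ∀ u : H, 0 ≤ fconj φ u)
    (hs : IsGamma0 (fun v : G => -(s v)))
    (γ : ℝ) (hγ : 0 < γ) (x : H) (y : G) (hmem : (x, y) ∈ Omega3 φ s γ) :
    0 < s (projC (closure (sdom s)) y) ∧
    eta7eq φ s γ x y ((s (projC (closure (sdom s)) y)).toReal) ∧
    (∀ η : ℝ, 0 ≤ η → eta7eq φ s γ x y η →
        (η : EReal) = s (projC (closure (sdom s)) y)) ∧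
    prox (smulE γ (persp φ s)) (pairHG x y) =
      pairHG
        (x - γ • prox (smulE ((s (projC (closure (sdom s)) y)).toReal / γ) (fconj φ)) (γ⁻¹ • x))
        (projC (closure (sdom s)) y) :=
  ⟨hmem.2.1, eta7eq_toReal hs hγ hmem, fun _ _ => coe_eq_of_eta7eq hφ hc1 hs hγ hmem,
    prox_smulE_persp hφ (convex_sdom hs) hγ hmem⟩

/-- Proposition 4.2(iii). -/
theorem stmt13 {H G : Type*} [NormedAddCommGroup H] [InnerProductSpace ℝ H] [CompleteSpace H]
    [NormedAddCommGroup G] [InnerProductSpace ℝ G] [CompleteSpace G]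
    (φ : H → EReal) (s : G → EReal) (hφ : IsGamma0 φ)
    (hc1 : ∀ u : H, 0 ≤ fconj φ u)
    (hc2 : ∃ u : H, 0 < fconj φ u ∧ fconj φ u < ⊤)
    (hs : IsGamma0 (fun v : G => -(s v)))
    (hS : ∃ v : G, 0 < s v ∧ s v < ⊤)
    (γ : ℝ) (hγ : 0 < γ) (x : H) (y : G) (hmem : (x, y) ∈ Omega3 φ s γ) :
    0 < s (projC (closure (sdom s)) y) ∧
    eta7eq φ s γ x y ((s (projC (closure (sdom s)) y)).toReal) ∧
    (∀ η : ℝ, 0 ≤ η → eta7eq φ s γ x y η →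
        (η : EReal) = s (projC (closure (sdom s)) y)) ∧
    prox (smulE γ (persp φ s)) (pairHG x y) =
      pairHG
        (x - γ • prox (smulE ((s (projC (closure (sdom s)) y)).toReal / γ) (fconj φ)) (γ⁻¹ • x))
        (projC (closure (sdom s)) y) :=
  stmt13_general φ s hφ hc1 hs γ hγ x y hmem
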